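/- Define F : [0,1] → ℝ by F(t) = 0.68145/√(1 − 0.53562·t). Then for all reals r ≥ 0 and g ≥ 0 with r + g ≤ 1, the quantity x = (1 − 0.7)·g·F(r) + 0.7·∫_r^{r+g} F(t) dt satisfies 0 ≤ x ≤ g. -/

import Mathlib

noncomputable def F (t : ℝ) : ℝ := 0.68145 / Real.sqrt (1 - 0.53562 * t)

open MeasureTheory Set

theorem intervalIntegral_mem_Icc {f : ℝ → ℝ} {a b m M : ℝ} (hab : a ≤ b)
    (hf : IntervalIntegrable f volume a b) (hbounds : MapsTo f (Icc a b) (Icc m M)) :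
    ∫ t in a..b, f t ∈ Icc ((b - a) * m) ((b - a) * M) := by
  constructor
  · calc
      (b - a) * m = ∫ _ in a..b, m := by simp
      _ ≤ ∫ t in a..b, f t :=
        intervalIntegral.integral_mono_on hab intervalIntegrable_const hf
          fun t ht => (hbounds ht).1
  · calc
      ∫ t in a..b, f t ≤ ∫ _ in a..b, M :=
        intervalIntegral.integral_mono_on hab hf intervalIntegrable_const
          fun t ht => (hbounds ht).2
      _ = (b - a) * M := by simp

theorem F_nonneg (t : ℝ) : 0 ≤ F t := by
  unfold F
  positivity

theorem F_le_one {t : ℝ} (ht : t ≤ 1) : F t ≤ 1 := by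
  -- The constants satisfy `0.68145 ^ 2 ≤ 1 - 0.53562`, with a margin below `10⁻⁵`.
  have numerator_le : (0.68145 : ℝ) ≤ √(1 - 0.53562 * t) :=
    Real.le_sqrt_of_sq_le (by linarith)
  exact div_le_one_of_le₀ numerator_le (Real.sqrt_nonneg _)

theorem continuousOn_F : ContinuousOn F (Iic 1) := by
  refine continuousOn_const.div (by fun_prop) fun t (ht : t ≤ 1) => ?_
  exact Real.sqrt_ne_zero'.mpr (by linarith)

theorem integral_F_mem_Icc {a b : ℝ} (hab : a ≤ b) (hb : b ≤ 1) :
    ∫ t in a..b, F t ∈ Icc 0 (b - a) := by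
  have F_integrable : IntervalIntegrable F volume a b :=
    (continuousOn_F.mono fun _ ht => ht.2.trans hb).intervalIntegrable_of_Icc hab
  simpa only [mul_zero, mul_one] using intervalIntegral_mem_Icc hab F_integrable
    fun t ht => ⟨F_nonneg t, F_le_one (ht.2.trans hb)⟩

theorem x_between_zero_and_g_general {w r g : ℝ} (hw : w ∈ Icc 0 1) (hg : 0 ≤ g)
    (hrg : r + g ≤ 1) :
    (1 - w) * g * F r + w * (∫ t in r..(r + g), F t) ∈ Icc 0 g := by
  have rectangle_mem : g * F r ∈ Icc 0 g :=
    ⟨mul_nonneg hg (F_nonneg r), mul_le_of_le_one_right hg (F_le_one (by linarith))⟩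
  have integral_mem : ∫ t in r..(r + g), F t ∈ Icc 0 g := by
    simpa only [add_sub_cancel_left] using integral_F_mem_Icc (le_add_of_nonneg_right hg) hrg
  simpa only [smul_eq_mul, mul_assoc] using
    convex_Icc 0 g rectangle_mem integral_mem (sub_nonneg.mpr hw.2) hw.1 (sub_add_cancel 1 w)

theorem x_between_zero_and_g (r g : ℝ) (hr : 0 ≤ r) (hg : 0 ≤ g) (hrg : r + g ≤ 1) :
    0 ≤ (1 - 0.7) * g * F r + 0.7 * ∫ t in r..(r + g), F t ∧
    (1 - 0.7) * g * F r + 0.7 * (∫ t in r..(r + g), F t) ≤ g :=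
  x_between_zero_and_g_general ⟨by norm_num, by norm_num⟩ hg hrg
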